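/- arXiv:1503.00864 — 2 statements merged into one kernel-verified Lean document; each statement's English description precedes it below -/
import Mathlib

section
/- Let a, b, b_0, B, B_0 be real numbers with b ≥ 0 and |a| < b_0 − b. Define h : ℝ → ℝ by h(x) = exp(a x)·cosh(B_0 + b_0 x)/cosh(B + b x). Then there exists ξ ∈ ℝ such that h is strictly decreasing on (−∞, ξ], strictly increasing on [ξ, ∞) (so h attains a unique minimum at ξ), and h(x) → +∞ as x → +∞ and as x → −∞. -/
open Real Set Filter

/-!
The logarithmic derivative of `exp (a x) cosh u / cosh v`, with `u = B0 + b0 x` and `v = B + b x`,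
need not be monotone, but multiplying it by `2 cosh u cosh v > 0` and using the product formulas
turns it into
`(a cosh (u + v) + (b0 - b) sinh (u + v)) + (a cosh (u - v) + (b0 + b) sinh (u - v))`.
If `|a| + |b| < b0`, both summands are strictly increasing in `x`, so the derivative changes sign
at most once; it does vanish somewhere, because the function grows like `exp ((b0 - |b| - |a|) |x|)`
at least and hence attains its minimum.
-/

theorem abs_sinh_lt_cosh (t : ℝ) : |sinh t| < cosh t := by
  rw [abs_sinh, ← cosh_abs]
  exact sinh_lt_cosh |t|

theorem exp_abs_div_two_le_cosh (t : ℝ) : exp |t| / 2 ≤ cosh t := by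
  rw [← cosh_abs, cosh_eq]
  linarith [exp_pos (-|t|)]

theorem cosh_le_exp_abs (t : ℝ) : cosh t ≤ exp |t| := by
  rw [← cosh_abs, ← cosh_add_sinh]
  linarith [sinh_nonneg_iff.2 (abs_nonneg t)]

theorem strictMono_mul_cosh_add_mul_sinh {a c : ℝ} (hac : |a| < c) :
    StrictMono fun t : ℝ => a * cosh t + c * sinh t := by
  refine strictMono_of_hasDerivAt_pos (f' := fun t => a * sinh t + c * cosh t)
    (fun t => ((hasDerivAt_cosh t).const_mul a).add ((hasDerivAt_sinh t).const_mul c)) fun t => ?_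
  have hsinh : |a * sinh t| ≤ |a| * cosh t := by
    rw [abs_mul]
    gcongr
    exact (abs_sinh_lt_cosh t).le
  have hcosh : |a| * cosh t < c * cosh t := by
    gcongr
  linarith [neg_abs_le (a * sinh t)]

theorem exists_strictAntiOn_Iic_strictMonoOn_Ici {f w g : ℝ → ℝ}
    (hf : Tendsto f (cocompact ℝ) atTop) (hderiv : ∀ x, HasDerivAt f (w x * g x) x)
    (hw : ∀ x, 0 < w x) (hg : StrictMono g) :
    ∃ ξ, StrictAntiOn f (Iic ξ) ∧ StrictMonoOn f (Ici ξ) := by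
  have hcont : Continuous f := continuous_iff_continuousAt.2 fun x => (hderiv x).continuousAt
  obtain ⟨ξ, hmin⟩ := hcont.exists_forall_le hf
  have hcrit : w ξ * g ξ = 0 :=
    IsLocalMin.hasDerivAt_eq_zero (Eventually.of_forall hmin) (hderiv ξ)
  have hgξ : g ξ = 0 := (mul_eq_zero.1 hcrit).resolve_left (hw ξ).ne'
  refine ⟨ξ, ?_, ?_⟩
  · refine strictAntiOn_of_hasDerivWithinAt_neg (convex_Iic ξ) hcont.continuousOn
      (fun x _ => (hderiv x).hasDerivWithinAt) fun x hx => ?_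
    rw [interior_Iic] at hx
    exact mul_neg_of_pos_of_neg (hw x) (hgξ ▸ hg hx)
  · refine strictMonoOn_of_hasDerivWithinAt_pos (convex_Ici ξ) hcont.continuousOn
      (fun x _ => (hderiv x).hasDerivWithinAt) fun x hx => ?_
    rw [interior_Ici] at hx
    exact mul_pos (hw x) (hgξ ▸ hg hx)

/-- The exponentially tilted ratio of hyperbolic cosines; the forward bond price as a function of
the driving process has this form. -/
noncomputable def tiltedCoshRatio (a b b0 B B0 x : ℝ) : ℝ :=
  exp (a * x) * cosh (B0 + b0 * x) / cosh (B + b * x)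

namespace tiltedCoshRatio

/-- The factor of the derivative of `tiltedCoshRatio` that carries its sign: the logarithmic
derivative times `2 * cosh (B0 + b0 * x) * cosh (B + b * x)`, with products of hyperbolic functions
expanded into sums. -/
noncomputable def slope (a b b0 B B0 x : ℝ) : ℝ :=
  (a * cosh (B0 + B + (b0 + b) * x) + (b0 - b) * sinh (B0 + B + (b0 + b) * x)) +
    (a * cosh (B0 - B + (b0 - b) * x) + (b0 + b) * sinh (B0 - B + (b0 - b) * x))

variable (a b b0 B B0 x : ℝ)

theorem neg_numerator_arg :
    tiltedCoshRatio a b (-b0) B (-B0) = tiltedCoshRatio a b b0 B B0 := by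
  funext x
  rw [tiltedCoshRatio, tiltedCoshRatio, neg_mul, ← neg_add, cosh_neg]

theorem slope_eq_two_mul :
    slope a b b0 B B0 x =
      2 * (a * cosh (B0 + b0 * x) * cosh (B + b * x) + b0 * sinh (B0 + b0 * x) * cosh (B + b * x) -
        b * cosh (B0 + b0 * x) * sinh (B + b * x)) := by
  have hadd : B0 + B + (b0 + b) * x = (B0 + b0 * x) + (B + b * x) := by ring
  have hsub : B0 - B + (b0 - b) * x = (B0 + b0 * x) - (B + b * x) := by ring
  rw [slope, hadd, hsub, cosh_add (B0 + b0 * x), sinh_add (B0 + b0 * x), cosh_sub, sinh_sub]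
  ring

protected theorem hasDerivAt :
    HasDerivAt (tiltedCoshRatio a b b0 B B0)
      (exp (a * x) / (2 * cosh (B + b * x) ^ 2) * slope a b b0 B B0 x) x := by
  have haffine (c d : ℝ) : HasDerivAt (fun y => c + d * y) d x := by
    simpa using ((hasDerivAt_id x).const_mul d).const_add c
  have hexp : HasDerivAt (fun y => exp (a * y)) (exp (a * x) * a) x := by
    simpa using (haffine 0 a).exp
  have hv : cosh (B + b * x) ≠ 0 := (cosh_pos _).ne'
  refine ((hexp.mul (haffine B0 b0).cosh).div (haffine B b).cosh hv).congr_deriv ?_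
  rw [slope_eq_two_mul, Pi.mul_apply]
  field_simp

theorem exp_div_two_le :
    exp ((|b0| - |b| - |a|) * |x| - (|B0| + |B|)) / 2 ≤ tiltedCoshRatio a b b0 B B0 x := by
  have hax : -(|a| * |x|) ≤ a * x := by
    rw [← abs_mul]
    exact neg_abs_le _
  have hu : |b0| * |x| - |B0| ≤ |B0 + b0 * x| := by
    rw [← abs_mul, add_comm]
    simpa only [abs_neg, sub_neg_eq_add] using abs_sub_abs_le_abs_sub (b0 * x) (-B0)
  have hv : |B + b * x| ≤ |B| + |b| * |x| := by
    rw [← abs_mul]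
    exact abs_add_le _ _
  calc exp ((|b0| - |b| - |a|) * |x| - (|B0| + |B|)) / 2
      ≤ exp (a * x + |B0 + b0 * x| - |B + b * x|) / 2 := by
        gcongr exp ?_ / 2
        linarith
    _ = exp (a * x) * (exp |B0 + b0 * x| / 2) / exp |B + b * x| := by
        rw [exp_sub, exp_add]
        ring
    _ ≤ exp (a * x) * cosh (B0 + b0 * x) / cosh (B + b * x) := by
        gcongr
        · exact exp_abs_div_two_le_cosh _
        · exact cosh_le_exp_abs _

variable {a b b0}

theorem strictMono_slope (hab : |a| + |b| < b0) :
    StrictMono (slope a b b0 B B0) := by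
  have hb : |b| < b0 := by linarith [abs_nonneg a]
  obtain ⟨hadd, hsub⟩ : 0 < b0 + b ∧ 0 < b0 - b := by
    constructor <;> linarith [neg_abs_le b, le_abs_self b]
  have hs : StrictMono fun x => B0 + B + (b0 + b) * x := fun x y hxy => by dsimp only; gcongr
  have hd : StrictMono fun x => B0 - B + (b0 - b) * x := fun x y hxy => by dsimp only; gcongr
  have ha_sub : |a| < b0 - b := by linarith [le_abs_self b]
  have ha_add : |a| < b0 + b := by linarith [neg_abs_le b]
  exact ((strictMono_mul_cosh_add_mul_sinh ha_sub).comp hs).add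
    ((strictMono_mul_cosh_add_mul_sinh ha_add).comp hd)

theorem tendsto_cocompact_atTop (hab : |a| + |b| < |b0|) :
    Tendsto (tiltedCoshRatio a b b0 B B0) (cocompact ℝ) atTop := by
  have hrate : 0 < |b0| - |b| - |a| := by linarith
  have hexponent : Tendsto (fun x : ℝ => (|b0| - |b| - |a|) * |x| - (|B0| + |B|))
      (cocompact ℝ) atTop :=
    tendsto_atTop_add_const_right _ _ (tendsto_norm_cocompact_atTop.const_mul_atTop hrate)
  exact tendsto_atTop_mono (exp_div_two_le a b b0 B B0)
    ((tendsto_exp_atTop.comp hexponent).atTop_div_const two_pos)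

theorem exists_strictAntiOn_strictMonoOn (hab : |a| + |b| < |b0|) :
    ∃ ξ, StrictAntiOn (tiltedCoshRatio a b b0 B B0) (Iic ξ) ∧
      StrictMonoOn (tiltedCoshRatio a b b0 B B0) (Ici ξ) := by
  wlog hb0 : 0 ≤ b0 generalizing b0 B0
  · rw [← neg_numerator_arg]
    exact this (-B0) (by rwa [abs_neg]) (by linarith)
  refine exists_strictAntiOn_Iic_strictMonoOn_Ici (tendsto_cocompact_atTop B B0 hab)
    (tiltedCoshRatio.hasDerivAt a b b0 B B0) (fun x => ?_)
    (strictMono_slope B B0 (by rwa [abs_of_nonneg hb0] at hab))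
  have := cosh_pos (B + b * x)
  positivity

end tiltedCoshRatio

theorem stmt_5_general {a b b0 : ℝ} (B B0 : ℝ) (hab : |a| + |b| < |b0|) :
    ∃ ξ : ℝ, StrictAntiOn (tiltedCoshRatio a b b0 B B0) (Iic ξ) ∧
      StrictMonoOn (tiltedCoshRatio a b b0 B B0) (Ici ξ) ∧
      Tendsto (tiltedCoshRatio a b b0 B B0) atTop atTop ∧
      Tendsto (tiltedCoshRatio a b b0 B B0) atBot atTop := by
  obtain ⟨ξ, hanti, hmono⟩ := tiltedCoshRatio.exists_strictAntiOn_strictMonoOn B B0 hab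
  have hlim := tiltedCoshRatio.tendsto_cocompact_atTop B B0 hab
  exact ⟨ξ, hanti, hmono, hlim.mono_left atTop_le_cocompact, hlim.mono_left atBot_le_cocompact⟩

theorem stmt_5 (a b b0 B B0 : ℝ) (hb : 0 ≤ b) (hab : |a| < b0 - b)
    (h : ℝ → ℝ)
    (hh : ∀ x, h x = Real.exp (a * x) * Real.cosh (B0 + b0 * x) / Real.cosh (B + b * x)) :
    ∃ ξ : ℝ, StrictAntiOn h (Iic ξ) ∧ StrictMonoOn h (Ici ξ) ∧
      Tendsto h atTop atTop ∧ Tendsto h atBot atTop := by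
  obtain rfl : h = tiltedCoshRatio a b b0 B B0 := funext hh
  exact stmt_5_general B B0 (by rw [abs_of_nonneg hb]; linarith [le_abs_self b0])
end

section
/- Let 0 < T_α ≤ T, let integers α < β index tenor dates, let u_α > u_{α+1} ≥ … ≥ u_β ≥ 0, let K ∈ ℝ, let Δ_{α+1},…,Δ_β > 0, and let κ ≥ 0. Writing G(u) := Φ(κ/√T_α − u √T_α) − Φ(−κ/√T_α − u √T_α) with Φ the standard normal cumulative distribution function, one has ∫_{−κ}^{κ} ( e^{u_β²(T−T_α)/2} cosh(u_β x) − e^{u_α²(T−T_α)/2} cosh(u_α x) + K Σ_{k=α+1}^{β} Δ_k e^{u_k²(T−T_α)/2} cosh(u_k x) ) · (1/√(2π T_α)) e^{−x²/(2T_α)} dx = e^{u_β² T/2} G(u_β) − e^{u_α² T/2} G(u_α) + K Σ_{k=α+1}^{β} Δ_k e^{u_k² T/2} G(u_k). -/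
open Real Set Finset

/-!
Multiplying the density of `N(0, t)` by `e^{wx}` gives `e^{w²t/2}` times the density of `N(wt, t)`,
so the mass that the tilted density gives to an interval is a difference of values of `Φ` after
standardization. Over a symmetric interval an even density does not see the odd part of `e^{wx}`,
which therefore may replace `cosh (wx)`. Finally `e^{w²(T - t)/2} e^{w²t/2} = e^{w²T/2}`.
-/

section

open MeasureTheory ProbabilityTheory
open scoped NNReal

theorem intervalIntegral_neg_self_eq_zero_of_odd {E : Type*} [NormedAddCommGroup E]
    [NormedSpace ℝ E] {f : ℝ → E} (hf : Function.Odd f) (a : ℝ) : ∫ x in -a..a, f x = 0 := by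
  have h_neg : ∫ x in -a..a, f x = -∫ x in -a..a, f x := by
    calc ∫ x in -a..a, f x = ∫ x in -a..a, f (-x) := by
          rw [intervalIntegral.integral_comp_neg, neg_neg]
      _ = -∫ x in -a..a, f x := by simp only [hf _, intervalIntegral.integral_neg]
  have : IsAddTorsionFree E := .of_isTorsionFree ℝ E
  exact self_eq_neg.mp h_neg

theorem integral_cosh_mul_eq_integral_exp_mul_of_even {f : ℝ → ℝ} {a : ℝ}
    (hf : Function.Even f) (hfi : IntervalIntegrable f volume (-a) a) (w : ℝ) :
    ∫ x in -a..a, cosh (w * x) * f x = ∫ x in -a..a, exp (w * x) * f x := by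
  have h_cosh : IntervalIntegrable (fun x ↦ cosh (w * x) * f x) volume (-a) a :=
    hfi.continuousOn_mul (continuous_cosh.comp (continuous_const_mul w)).continuousOn
  have h_sinh : IntervalIntegrable (fun x ↦ sinh (w * x) * f x) volume (-a) a :=
    hfi.continuousOn_mul (continuous_sinh.comp (continuous_const_mul w)).continuousOn
  have h_odd : Function.Odd fun x ↦ sinh (w * x) * f x := fun x ↦ by
    simp only [mul_neg, sinh_neg, hf x, neg_mul]
  simp only [← cosh_add_sinh, add_mul]
  rw [intervalIntegral.integral_add h_cosh h_sinh,
    intervalIntegral_neg_self_eq_zero_of_odd h_odd, add_zero]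

theorem even_gaussianPDFReal_zero (v : ℝ≥0) : Function.Even (gaussianPDFReal 0 v) := fun x ↦ by
  simp only [gaussianPDFReal, sub_zero, neg_sq]

theorem exp_mul_gaussianPDFReal (m : ℝ) (v : ℝ≥0) (w x : ℝ) :
    exp (w * x) * gaussianPDFReal m v x =
      exp (m * w + v * w ^ 2 / 2) * gaussianPDFReal (m + v * w) v x := by
  rcases eq_or_ne v 0 with rfl | hv
  · simp
  have complete_square : w * x + -(x - m) ^ 2 / (2 * v) =
      m * w + v * w ^ 2 / 2 + -(x - (m + v * w)) ^ 2 / (2 * v) := by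
    field
  simp only [gaussianPDFReal, mul_left_comm (exp _), ← exp_add, complete_square]

theorem integral_gaussianPDFReal_eq_integral_standard (m : ℝ) (v : ℝ≥0) (a b : ℝ) :
    ∫ x in a..b, gaussianPDFReal m v x =
      ∫ x in (a - m) / √v..(b - m) / √v, gaussianPDFReal 0 1 x := by
  have h_density (x : ℝ) :
      gaussianPDFReal m v x = (√v)⁻¹ * gaussianPDFReal 0 1 (x / √v - m / √v) := by
    have h_sq : (x / √v - m / √v) ^ 2 = (x - m) ^ 2 / v := by
      rw [← sub_div, div_pow, sq_sqrt v.coe_nonneg]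
    simp only [gaussianPDFReal, sub_zero, NNReal.coe_one, mul_one, h_sq,
      sqrt_mul' _ v.coe_nonneg, mul_inv]
    ring_nf
  simp only [h_density, intervalIntegral.integral_const_mul,
    intervalIntegral.inv_mul_integral_comp_div_sub, sub_div]

theorem integral_cosh_mul_gaussianPDFReal (v : ℝ≥0) (w κ : ℝ) :
    ∫ x in -κ..κ, cosh (w * x) * gaussianPDFReal 0 v x =
      exp (w ^ 2 * v / 2) *
        ∫ x in -κ / √v - w * √v..κ / √v - w * √v, gaussianPDFReal 0 1 x := by
  have h_shift : v * w / √v = w * √v := by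
    rw [mul_comm, mul_div_assoc, div_sqrt]
  rw [integral_cosh_mul_eq_integral_exp_mul_of_even (even_gaussianPDFReal_zero v)
    (integrable_gaussianPDFReal 0 v).intervalIntegrable]
  simp only [exp_mul_gaussianPDFReal, zero_mul, zero_add, intervalIntegral.integral_const_mul]
  rw [integral_gaussianPDFReal_eq_integral_standard, sub_div, sub_div, h_shift,
    mul_comm (v : ℝ) (w ^ 2)]

theorem integral_exp_mul_cosh_mul_gaussianPDFReal (T : ℝ) (v : ℝ≥0) (w κ : ℝ) :
    ∫ x in -κ..κ, exp (w ^ 2 * (T - v) / 2) * cosh (w * x) * gaussianPDFReal 0 v x =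
      exp (w ^ 2 * T / 2) *
        ∫ x in -κ / √v - w * √v..κ / √v - w * √v, gaussianPDFReal 0 1 x := by
  have h_exp : exp (w ^ 2 * (T - v) / 2) * exp (w ^ 2 * v / 2) = exp (w ^ 2 * T / 2) := by
    rw [← exp_add]
    ring_nf
  simp only [mul_assoc, intervalIntegral.integral_const_mul]
  rw [integral_cosh_mul_gaussianPDFReal, ← mul_assoc, h_exp]

theorem integral_sub_add_const_mul_sum_mul {ι : Type*} {a b : ℝ} {ρ : ℝ → ℝ}
    (hρ : IntervalIntegrable ρ volume a b) {f g : ℝ → ℝ}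
    (hf : ContinuousOn f (uIcc a b)) (hg : ContinuousOn g (uIcc a b)) (S : Finset ι)
    {h : ι → ℝ → ℝ} (hh : ∀ k ∈ S, ContinuousOn (h k) (uIcc a b)) (c : ι → ℝ) (K : ℝ) :
    ∫ x in a..b, (f x - g x + K * ∑ k ∈ S, c k * h k x) * ρ x =
      (∫ x in a..b, f x * ρ x) - (∫ x in a..b, g x * ρ x) +
        K * ∑ k ∈ S, c k * ∫ x in a..b, h k x * ρ x := by
  have hfρ := hρ.continuousOn_mul hf
  have hgρ := hρ.continuousOn_mul hg
  have hhρ (k) (hk : k ∈ S) := (hρ.continuousOn_mul (hh k hk)).const_mul (c k)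
  have h_sum : IntervalIntegrable (fun x ↦ ∑ k ∈ S, c k * (h k x * ρ x)) volume a b := by
    simpa only [Finset.sum_fn] using IntervalIntegrable.sum S hhρ
  simp only [← intervalIntegral.integral_const_mul (c _)]
  rw [← intervalIntegral.integral_finsetSum hhρ, ← intervalIntegral.integral_const_mul,
    ← intervalIntegral.integral_sub hfρ hgρ,
    ← intervalIntegral.integral_add (hfρ.sub hgρ) (h_sum.const_mul K)]
  simp only [add_mul, sub_mul, mul_assoc, Finset.sum_mul]

theorem stmt_13_general {ι : Type*} (T Tα : ℝ) (hTα : 0 < Tα) (S : Finset ι) (α β : ι)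
    (u Δ : ι → ℝ) (K κ : ℝ) (Φ : ℝ → ℝ)
    (hΦ : ∀ y : ℝ, Φ y = ∫ s in Iic y, (1 / √(2 * π)) * exp (-s ^ 2 / 2))
    (G : ℝ → ℝ)
    (hG : ∀ w : ℝ, G w = Φ (κ / √Tα - w * √Tα) - Φ (-κ / √Tα - w * √Tα)) :
    (∫ x in (-κ)..κ,
        (exp (u β ^ 2 * (T - Tα) / 2) * cosh (u β * x)
          - exp (u α ^ 2 * (T - Tα) / 2) * cosh (u α * x)
          + K * ∑ k ∈ S, Δ k * exp (u k ^ 2 * (T - Tα) / 2) * cosh (u k * x)) *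
          (1 / √(2 * π * Tα)) * exp (-x ^ 2 / (2 * Tα)))
      = exp (u β ^ 2 * T / 2) * G (u β) - exp (u α ^ 2 * T / 2) * G (u α)
        + K * ∑ k ∈ S, Δ k * exp (u k ^ 2 * T / 2) * G (u k) := by
  lift Tα to ℝ≥0 using hTα.le
  have h_density (x : ℝ) :
      1 / √(2 * π * Tα) * exp (-x ^ 2 / (2 * Tα)) = gaussianPDFReal 0 Tα x := by
    simp only [gaussianPDFReal, sub_zero, one_div]
  have hΦ' (y : ℝ) : Φ y = ∫ s in Iic y, gaussianPDFReal 0 1 s := by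
    simp only [hΦ, gaussianPDFReal, sub_zero, one_div, NNReal.coe_one, mul_one]
  have hG' (w : ℝ) :
      G w = ∫ x in -κ / √Tα - w * √Tα..κ / √Tα - w * √Tα, gaussianPDFReal 0 1 x := by
    have h_int := integrable_gaussianPDFReal 0 1
    rw [hG, hΦ', hΦ', intervalIntegral.integral_Iic_sub_Iic h_int.integrableOn h_int.integrableOn]
  have h_term (w : ℝ) :
      ∫ x in -κ..κ, exp (w ^ 2 * (T - Tα) / 2) * cosh (w * x) * gaussianPDFReal 0 Tα x =
        exp (w ^ 2 * T / 2) * G w := by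
    rw [integral_exp_mul_cosh_mul_gaussianPDFReal, hG']
  have h_cont (w : ℝ) : Continuous fun x ↦ exp (w ^ 2 * (T - Tα) / 2) * cosh (w * x) :=
    continuous_const.mul (continuous_cosh.comp (continuous_const_mul w))
  simp only [mul_assoc _ (1 / √_), h_density, mul_assoc (Δ _)]
  rw [integral_sub_add_const_mul_sum_mul (integrable_gaussianPDFReal 0 Tα).intervalIntegrable
    (h_cont _).continuousOn (h_cont _).continuousOn S (fun k _ ↦ (h_cont (u k)).continuousOn)]
  simp only [h_term]

end

theorem stmt_13 (T Tα : ℝ) (hTα : 0 < Tα) (hTαT : Tα ≤ T)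
    (α β : ℤ) (hαβ : α < β)
    (u : ℤ → ℝ) (huα : u (α + 1) < u α)
    (hudec : ∀ k : ℤ, α + 1 ≤ k → k < β → u (k + 1) ≤ u k)
    (huβ : 0 ≤ u β)
    (Δ : ℤ → ℝ) (hΔ : ∀ k ∈ Finset.Icc (α + 1) β, 0 < Δ k)
    (K κ : ℝ) (hκ : 0 ≤ κ)
    (Φ : ℝ → ℝ)
    (hΦ : ∀ y : ℝ, Φ y = ∫ s in Iic y, (1 / Real.sqrt (2 * Real.pi)) * Real.exp (-s ^ 2 / 2))
    (G : ℝ → ℝ)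
    (hG : ∀ w : ℝ, G w = Φ (κ / Real.sqrt Tα - w * Real.sqrt Tα)
      - Φ (-κ / Real.sqrt Tα - w * Real.sqrt Tα)) :
    (∫ x in (-κ)..κ,
        (Real.exp (u β ^ 2 * (T - Tα) / 2) * Real.cosh (u β * x)
          - Real.exp (u α ^ 2 * (T - Tα) / 2) * Real.cosh (u α * x)
          + K * ∑ k ∈ Finset.Icc (α + 1) β,
              Δ k * Real.exp (u k ^ 2 * (T - Tα) / 2) * Real.cosh (u k * x)) *
          (1 / Real.sqrt (2 * Real.pi * Tα)) * Real.exp (-x ^ 2 / (2 * Tα)))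
      = Real.exp (u β ^ 2 * T / 2) * G (u β)
        - Real.exp (u α ^ 2 * T / 2) * G (u α)
        + K * ∑ k ∈ Finset.Icc (α + 1) β, Δ k * Real.exp (u k ^ 2 * T / 2) * G (u k) :=
  stmt_13_general T Tα hTα (Finset.Icc (α + 1) β) α β u Δ K κ Φ hΦ G hG
end
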